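/- For $Z=(Z_0,Z_1,Z_2,Z_3)\in\mathbb C^4$ define $\sigma(Z)\in\mathbb C^4$ by $\sigma(Z)_\mu=\eta_\mu\bigl(Z_\mu^3-Z_\mu\sum_{\nu\ne\mu}Z_\nu^2-2\prod_{\lambda\ne\mu}Z_\lambda\bigr)$ for $\mu\in\{0,1,2,3\}$, where $\eta_0=1$ and $\eta_1=\eta_2=\eta_3=-1$. Then: (i) for every $Z\in\mathbb C^4$ the three identities $Z_1\sigma(Z)_0-Z_0\sigma(Z)_1+Z_3\sigma(Z)_2+Z_2\sigma(Z)_3=0$, $Z_2\sigma(Z)_0+Z_3\sigma(Z)_1-Z_0\sigma(Z)_2+Z_1\sigma(Z)_3=0$, and $Z_3\sigma(Z)_0+Z_2\sigma(Z)_1+Z_1\sigma(Z)_2-Z_0\sigma(Z)_3=0$ hold; and (ii) for all $a,b,c\in\mathbb C$ and every $Z\in\mathbb C^4$ satisfying $b(Z_0^2-Z_1^2)=a(Z_0^2-Z_2^2)$, $c(Z_0^2-Z_2^2)=b(Z_0^2-Z_3^2)$ and $c(Z_0^2-Z_1^2)=a(Z_0^2-Z_3^2)$ (that is, for nonzero $a,b,c$,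 $\frac{Z_0^2-Z_1^2}{a}=\frac{Z_0^2-Z_2^2}{b}=\frac{Z_0^2-Z_3^2}{c}$), the three further identities $(b-c)Z_1\sigma(Z)_0+(b-c)Z_0\sigma(Z)_1-aZ_3\sigma(Z)_2+aZ_2\sigma(Z)_3=0$, $(c-a)Z_2\sigma(Z)_0+bZ_3\sigma(Z)_1+(c-a)Z_0\sigma(Z)_2-bZ_1\sigma(Z)_3=0$, and $(a-b)Z_3\sigma(Z)_0-cZ_2\sigma(Z)_1+cZ_1\sigma(Z)_2+(a-b)Z_0\sigma(Z)_3=0$ hold. -/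

import Mathlib

/-- The cubic map
`σ(Z)_μ = η_μ (Z_μ³ − Z_μ Σ_{ν≠μ} Z_ν² − 2 ∏_{λ≠μ} Z_λ)` of `ℂ⁴`, with
`η₀ = 1` and `η₁ = η₂ = η₃ = −1`. -/
noncomputable def sigma15 (Z : Fin 4 → ℂ) : Fin 4 → ℂ := fun μ =>
  (if μ = 0 then 1 else -1) *
    ((Z μ) ^ 3 - Z μ * (∑ ν ∈ Finset.univ.erase μ, (Z ν) ^ 2)
      - 2 * ∏ l ∈ Finset.univ.erase μ, Z l)

/-- The coordinates of `sigma15` in expanded form. -/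
theorem sigma15_apply (Z : Fin 4 → ℂ) :
    sigma15 Z 0 = Z 0 ^ 3 - Z 0 * (Z 1 ^ 2 + Z 2 ^ 2 + Z 3 ^ 2) - 2 * (Z 1 * Z 2 * Z 3) ∧
    sigma15 Z 1 = -(Z 1 ^ 3 - Z 1 * (Z 0 ^ 2 + Z 2 ^ 2 + Z 3 ^ 2) - 2 * (Z 0 * Z 2 * Z 3)) ∧
    sigma15 Z 2 = -(Z 2 ^ 3 - Z 2 * (Z 0 ^ 2 + Z 1 ^ 2 + Z 3 ^ 2) - 2 * (Z 0 * Z 1 * Z 3)) ∧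
    sigma15 Z 3 = -(Z 3 ^ 3 - Z 3 * (Z 0 ^ 2 + Z 1 ^ 2 + Z 2 ^ 2) - 2 * (Z 0 * Z 1 * Z 2)) := by
  have e0 : (Finset.univ.erase 0 : Finset (Fin 4)) = {1, 2, 3} := by decide
  have e1 : (Finset.univ.erase 1 : Finset (Fin 4)) = {0, 2, 3} := by decide
  have e2 : (Finset.univ.erase 2 : Finset (Fin 4)) = {0, 1, 3} := by decide
  have e3 : (Finset.univ.erase 3 : Finset (Fin 4)) = {0, 1, 2} := by decide
  refine ⟨?_, ?_, ?_, ?_⟩ <;> simp [sigma15, e0, e1, e2, e3] <;> ring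

/-- `σ(Z)` satisfies the first three rows of the system `N(Z)·σ(Z) = 0` for
every `Z`, and the last three rows whenever `Z` lies on the characteristic curve
`(Z₀² − Z₁²)/a = (Z₀² − Z₂²)/b = (Z₀² − Z₃²)/c`, whose equations are written as the
three pairwise cross-multiplied equalities so that zero parameters are allowed too. -/
theorem stmt_15 :
    (∀ Z : Fin 4 → ℂ,
      Z 1 * sigma15 Z 0 - Z 0 * sigma15 Z 1 + Z 3 * sigma15 Z 2 + Z 2 * sigma15 Z 3 = 0 ∧
      Z 2 * sigma15 Z 0 + Z 3 * sigma15 Z 1 - Z 0 * sigma15 Z 2 + Z 1 * sigma15 Z 3 = 0 ∧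
      Z 3 * sigma15 Z 0 + Z 2 * sigma15 Z 1 + Z 1 * sigma15 Z 2 - Z 0 * sigma15 Z 3 = 0) ∧
    (∀ (a b c : ℂ) (Z : Fin 4 → ℂ),
      b * ((Z 0) ^ 2 - (Z 1) ^ 2) = a * ((Z 0) ^ 2 - (Z 2) ^ 2) →
      c * ((Z 0) ^ 2 - (Z 2) ^ 2) = b * ((Z 0) ^ 2 - (Z 3) ^ 2) →
      c * ((Z 0) ^ 2 - (Z 1) ^ 2) = a * ((Z 0) ^ 2 - (Z 3) ^ 2) →
      ((b - c) * Z 1 * sigma15 Z 0 + (b - c) * Z 0 * sigma15 Z 1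
          - a * Z 3 * sigma15 Z 2 + a * Z 2 * sigma15 Z 3 = 0 ∧
       (c - a) * Z 2 * sigma15 Z 0 + b * Z 3 * sigma15 Z 1
          + (c - a) * Z 0 * sigma15 Z 2 - b * Z 1 * sigma15 Z 3 = 0 ∧
       (a - b) * Z 3 * sigma15 Z 0 - c * Z 2 * sigma15 Z 1
          + c * Z 1 * sigma15 Z 2 + (a - b) * Z 0 * sigma15 Z 3 = 0)) := by
  refine ⟨fun Z => ?_, fun a b c Z h₁ h₂ h₃ => ?_⟩ <;>
    obtain ⟨s0, s1, s2, s3⟩ := sigma15_apply Z <;> rw [s0, s1, s2, s3]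
  · refine ⟨?_, ?_, ?_⟩ <;> ring
  · refine ⟨?_, ?_, ?_⟩
    · linear_combination 2 * (Z 0 * Z 1 + Z 2 * Z 3) * (h₁ - h₃)
    · linear_combination 2 * (Z 0 * Z 2 + Z 1 * Z 3) * (h₁ + h₂)
    · linear_combination 2 * (Z 0 * Z 3 + Z 1 * Z 2) * (h₂ - h₃)
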